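/- Let θ₀ ∈ ℝ and d ∈ ℕ. For each θ ∈ ℝ let p θ : ℝ^d → ℝ be a strictly positive measurable function with Z(θ) = ∫ p θ x dx finite and positive, and let π θ (x) = p θ x / Z(θ). Assume: (i) there is a neighborhood U of θ₀ such that for almost every x the map θ ↦ p θ x is twice differentiable on U; (ii) there are integrable functions g₁, g₂ with |∂θ p θ x| ≤ g₁ x and |∂²θ p θ x| ≤ g₂ x for all θ ∈ U and almost every x. Then θ ↦ log Z(θ) is twice differentiable at θ₀ and (d²/dθ² log Z(θ))|_{θ=θ₀} = −((d/dθ log Z(θ))|_{θ=θ₀})² + ∫ [ ∂²θ log(p θ x)|_{θ=θ₀} + (∂θ log(p θ x)|_{θ=θ₀})² ] · π θ₀ (x) dx. -/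

import Mathlib

open MeasureTheory Filter Topology

open Set

/-!
For `f` twice differentiable with `f t ≠ 0`, `∂²(log f) + (∂ log f)² = ∂²f / f`. Applied to
`p · x` this turns the integrand against `π θ₀` into `∂²θ p θ₀ x / Z θ₀`; applied to `Z` it reduces
the identity to `∂²Z = ∫ ∂²θ p`, that is, to differentiating twice under the integral sign.

The null set outside which the derivative is dominated may depend on `θ`, so a uniform bound in `θ`
is not available pointwise in `x`. By joint measurability of `(θ, x) ↦ ∂θ p θ x` and Fubini, for
almost every `x` the bound holds for almost every `θ`, and this already makes `θ ↦ p θ x`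
Lipschitz with the dominating constant.
-/

section Caratheodory

variable {Θ α β : Type*} [MeasurableSpace Θ] [MeasurableSpace α] [TopologicalSpace β]
  [TopologicalSpace.PseudoMetrizableSpace β] {ν : Measure Θ} {μ : Measure α}

lemma aestronglyMeasurable_uncurry_comp_simpleFunc {ι : Type*} {F : ι → α → β}
    (φ : SimpleFunc Θ ι) (hF : ∀ t, AEStronglyMeasurable (F (φ t)) μ) :
    AEStronglyMeasurable (fun z : Θ × α => F (φ z.1) z.2) (ν.prod μ) := by
  have hcover : ⋃ i : φ.range, (φ ⁻¹' {i.1}) ×ˢ (univ : Set α) = univ := by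
    ext z
    simp
  rw [← Measure.restrict_univ (μ := ν.prod μ), ← hcover, aestronglyMeasurable_iUnion_iff]
  rintro ⟨i, hi⟩
  obtain ⟨t, rfl⟩ := SimpleFunc.mem_range.1 hi
  refine (hF t).comp_snd.restrict.congr <| ae_restrict_of_forall_mem
    ((φ.measurableSet_fiber _).prod .univ) fun z hz => ?_
  exact congrFun (congrArg F hz.1.symm) z.2

lemma aestronglyMeasurable_uncurry_of_continuousOn [SFinite μ] [PseudoEMetricSpace Θ]
    [SecondCountableTopology Θ] [OpensMeasurableSpace Θ] {F : Θ → α → β} {s : Set Θ}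
    (hs : MeasurableSet s)
    (hF_meas : ∀ θ ∈ s, AEStronglyMeasurable (F θ) μ)
    (hF_cont : ∀ᵐ x ∂μ, ContinuousOn (F · x) s) :
    AEStronglyMeasurable (Function.uncurry F) ((ν.restrict s).prod μ) := by
  obtain rfl | ⟨t₀, ht₀⟩ := s.eq_empty_or_nonempty
  · simp
  let φ := SimpleFunc.approxOn id measurable_id s t₀ ht₀
  have hφ_mem : ∀ n θ, φ n θ ∈ s := SimpleFunc.approxOn_mem measurable_id ht₀
  refine aestronglyMeasurable_of_tendsto_ae atTop (f := fun n z => F (φ n z.1) z.2)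
    (fun n => aestronglyMeasurable_uncurry_comp_simpleFunc (φ n)
      fun θ => hF_meas _ (hφ_mem n θ)) ?_
  filter_upwards [Measure.quasiMeasurePreserving_fst.ae (ae_restrict_mem hs),
    Measure.quasiMeasurePreserving_snd.ae hF_cont] with z hθ hcont
  have hφ_tendsto : Tendsto (φ · z.1) atTop (𝓝[s] z.1) :=
    tendsto_nhdsWithin_iff.2 ⟨SimpleFunc.tendsto_approxOn measurable_id ht₀ (subset_closure hθ),
      .of_forall fun n => hφ_mem n z.1⟩
  exact (hcont z.1 hθ).tendsto.comp hφ_tendsto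

end Caratheodory

lemma ae_ae_swap_of_nullMeasurableSet {α β : Type*} [MeasurableSpace α] [MeasurableSpace β]
    {μ : Measure α} {ν : Measure β} [SFinite μ] [SFinite ν] {p : α → β → Prop}
    (hp : NullMeasurableSet {z : α × β | p z.1 z.2} (μ.prod ν))
    (h : ∀ᵐ x ∂μ, ∀ᵐ y ∂ν, p x y) : ∀ᵐ y ∂ν, ∀ᵐ x ∂μ, p x y := by
  obtain ⟨t, ht_sub, ht_meas, ht_eq⟩ := hp.exists_measurable_subset_ae_eq
  have ht : ∀ᵐ x ∂μ, ∀ᵐ y ∂ν, (x, y) ∈ t := by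
    filter_upwards [h, Measure.ae_ae_of_ae_prod ht_eq.mem_iff] with x hx hxt
    filter_upwards [hx, hxt] with y hy hyt using hyt.2 hy
  filter_upwards [(Measure.ae_ae_comm (p := fun x y => (x, y) ∈ t) ht_meas).1 ht] with y hy
  exact hy.mono fun x hx => ht_sub hx

section ParametricDeriv

variable {α E : Type*} [MeasurableSpace α] {μ : Measure α} [NormedAddCommGroup E]

lemma aestronglyMeasurable_deriv_of_ae_differentiableAt {𝕜 : Type*}
    [NontriviallyNormedField 𝕜] [NormedSpace 𝕜 E] {F : 𝕜 → α → E} {θ₀ : 𝕜}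
    (hF_meas : ∀ᶠ θ in 𝓝 θ₀, AEStronglyMeasurable (F θ) μ)
    (hF_diff : ∀ᵐ x ∂μ, DifferentiableAt 𝕜 (F · x) θ₀) :
    AEStronglyMeasurable (fun x => deriv (F · x) θ₀) μ := by
  obtain ⟨u, hu, hu_meas⟩ := exists_seq_forall_of_frequently
    (hF_meas.filter_mono (nhdsWithin_le_nhds (s := {θ₀}ᶜ))).frequently
  refine aestronglyMeasurable_of_tendsto_ae atTop
    (f := fun n x => slope (F · x) θ₀ (u n))
    (fun n => ((hu_meas n).sub hF_meas.self_of_nhds).const_smul _) ?_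
  filter_upwards [hF_diff] with x hx
  exact (hasDerivAt_iff_tendsto_slope.1 hx.hasDerivAt).comp hu

variable [NormedSpace ℝ E] [SFinite μ] {F : ℝ → α → E} {U : Set ℝ}

lemma aestronglyMeasurable_uncurry_deriv (hU : IsOpen U)
    (hF_meas : ∀ θ ∈ U, AEStronglyMeasurable (F θ) μ)
    (hF_diff : ∀ᵐ x ∂μ, ∀ θ ∈ U, DifferentiableAt ℝ (F · x) θ) :
    AEStronglyMeasurable (fun z : ℝ × α => deriv (F · z.2) z.1)
      ((volume.restrict U).prod μ) := by
  obtain ⟨u, hu⟩ := exists_seq_tendsto (𝓝[≠] (0 : ℝ))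
  -- Restricting to `W n` keeps both parameters of the difference quotient `D n` inside `U`.
  let W n := U ∩ (· + u n) ⁻¹' U
  have hW_open n : IsOpen (W n) := hU.inter (hU.preimage (continuous_add_const (u n)))
  let D n θ x := (u n)⁻¹ • (F (θ + u n) x - F θ x)
  have hD_meas n : AEStronglyMeasurable (Function.uncurry (D n))
      ((volume.restrict (W n)).prod μ) := by
    refine aestronglyMeasurable_uncurry_of_continuousOn (hW_open n).measurableSet
      (fun θ hθ => ((hF_meas _ hθ.2).sub (hF_meas θ hθ.1)).const_smul _) ?_
    filter_upwards [hF_diff] with x hx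
    have hcont : ContinuousOn (F · x) U := fun θ hθ => (hx θ hθ).continuousAt.continuousWithinAt
    exact ((hcont.comp (by fun_prop) fun θ hθ => hθ.2).sub
      (hcont.mono inter_subset_left)).const_smul _
  refine aestronglyMeasurable_of_tendsto_ae atTop
    (f := fun n => (W n ×ˢ univ).indicator (Function.uncurry (D n))) (fun n => ?_) ?_
  · rw [aestronglyMeasurable_indicator_iff ((hW_open n).measurableSet.prod .univ),
      ← Measure.prod_restrict, Measure.restrict_restrict (hW_open n).measurableSet,
      Measure.restrict_univ, inter_eq_left.2 inter_subset_left]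
    exact hD_meas n
  · filter_upwards [Measure.quasiMeasurePreserving_fst.ae (ae_restrict_mem hU.measurableSet),
      Measure.quasiMeasurePreserving_snd.ae hF_diff] with ⟨θ, x⟩ hθ hx
    have hshift : Tendsto (fun n => θ + u n) atTop (𝓝 θ) := by
      simpa using (hu.mono_right nhdsWithin_le_nhds).const_add θ
    refine ((hx θ hθ).hasDerivAt.tendsto_slope_zero.comp hu).congr' ?_
    filter_upwards [hshift (hU.mem_nhds hθ)] with n hn
    have hmem : (θ, x) ∈ W n ×ˢ (univ : Set α) := ⟨⟨hθ, hn⟩, mem_univ x⟩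
    rw [indicator_of_mem hmem]
    rfl

lemma ae_ae_norm_deriv_le_swap (hU : IsOpen U)
    (hF_meas : ∀ θ ∈ U, AEStronglyMeasurable (F θ) μ)
    (hF_diff : ∀ᵐ x ∂μ, ∀ θ ∈ U, DifferentiableAt ℝ (F · x) θ)
    {g : α → ℝ} (hg : AEStronglyMeasurable g μ)
    (hbound : ∀ᵐ θ, θ ∈ U → ∀ᵐ x ∂μ, ‖deriv (F · x) θ‖ ≤ g x) :
    ∀ᵐ x ∂μ, ∀ᵐ θ, θ ∈ U → ‖deriv (F · x) θ‖ ≤ g x := by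
  simp only [← ae_restrict_iff' hU.measurableSet] at hbound ⊢
  exact ae_ae_swap_of_nullMeasurableSet
    ((aestronglyMeasurable_uncurry_deriv hU hF_meas hF_diff).norm.nullMeasurableSet_le
      hg.comp_snd) hbound

lemma lipschitzOnWith_of_ae_norm_deriv_le {f : ℝ → E} {C : NNReal} {s : Set ℝ}
    (hs : s.OrdConnected) (hf : ∀ t ∈ s, DifferentiableAt ℝ f t)
    (hC : ∀ᵐ t, t ∈ s → ‖deriv f t‖ ≤ C) : LipschitzOnWith C f s := by
  have hle : ∀ a ∈ s, ∀ b ∈ s, a ≤ b → dist (f a) (f b) ≤ C * dist a b := by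
    intro a ha b hb hab
    have hsub : Icc a b ⊆ s := hs.out ha hb
    calc dist (f a) (f b) = ‖f b - f a‖ := by rw [dist_comm, dist_eq_norm]
      _ ≤ ∫ _ in a..b, (C : ℝ) := by
        refine norm_sub_le_integral_of_norm_deriv_le_of_le hab
          (fun t ht => (hf t (hsub ht)).continuousAt.continuousWithinAt)
          (fun t ht => (hf t (hsub (Ioo_subset_Icc_self ht))).differentiableWithinAt)
          (hC.mono fun t ht hmem => ht (hsub (Ioo_subset_Icc_self hmem))) (by simp)
      _ = C * dist a b := by
        rw [intervalIntegral.integral_const, smul_eq_mul, mul_comm, dist_comm, Real.dist_eq,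
          abs_of_nonneg (sub_nonneg.2 hab)]
  refine LipschitzOnWith.of_dist_le_mul fun a ha b hb => ?_
  obtain hab | hba := le_total a b
  · exact hle a ha b hb hab
  · simpa only [dist_comm] using hle b hb a ha hba

lemma hasDerivAt_integral_of_ae_norm_deriv_le {θ₀ : ℝ} (hU : U ∈ 𝓝 θ₀)
    (hF_meas : ∀ θ ∈ U, AEStronglyMeasurable (F θ) μ) (hF_int : Integrable (F θ₀) μ)
    (hF_diff : ∀ᵐ x ∂μ, ∀ θ ∈ U, DifferentiableAt ℝ (F · x) θ)
    {g : α → ℝ} (hg : Integrable g μ)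
    (hbound : ∀ᵐ θ, θ ∈ U → ∀ᵐ x ∂μ, ‖deriv (F · x) θ‖ ≤ g x) :
    Integrable (fun x => deriv (F · x) θ₀) μ ∧
      HasDerivAt (fun θ => ∫ x, F θ x ∂μ) (∫ x, deriv (F · x) θ₀ ∂μ) θ₀ := by
  obtain ⟨ε, hε, hεU⟩ := Metric.mem_nhds_iff.1 hU
  have hswap := ae_ae_norm_deriv_le_swap Metric.isOpen_ball (fun θ hθ => hF_meas θ (hεU hθ))
    (hF_diff.mono fun x hx θ hθ => hx θ (hεU hθ)) hg.1
    (hbound.mono fun θ hθ hmem => hθ (hεU hmem))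
  have hlip : ∀ᵐ x ∂μ, LipschitzOnWith (Real.nnabs (g x)) (F · x) (Metric.ball θ₀ ε) := by
    filter_upwards [hF_diff, hswap] with x hx hgx
    exact lipschitzOnWith_of_ae_norm_deriv_le (convex_ball θ₀ ε).ordConnected
      (fun θ hθ => hx θ (hεU hθ))
      (hgx.mono fun θ hθ hmem => (hθ hmem).trans (le_abs_self (g x)))
  have hF_diff₀ : ∀ᵐ x ∂μ, DifferentiableAt ℝ (F · x) θ₀ :=
    hF_diff.mono fun x hx => hx θ₀ (mem_of_mem_nhds hU)
  have hF_meas₀ := eventually_of_mem hU hF_meas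
  exact hasDerivAt_integral_of_dominated_loc_of_lip (Metric.ball_mem_nhds θ₀ hε) hF_meas₀ hF_int
    (aestronglyMeasurable_deriv_of_ae_differentiableAt hF_meas₀ hF_diff₀) hlip hg
    (hF_diff₀.mono fun x hx => hx.hasDerivAt)

lemma hasDerivAt_deriv_integral_of_ae_norm_deriv_le {θ₀ : ℝ} (hU : U ∈ 𝓝 θ₀)
    (hF_int : ∀ θ ∈ U, Integrable (F θ) μ)
    (hF_diff : ∀ᵐ x ∂μ, ∀ θ ∈ U,
      DifferentiableAt ℝ (F · x) θ ∧ DifferentiableAt ℝ (deriv (F · x)) θ)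
    {g₁ g₂ : α → ℝ} (hg₁ : Integrable g₁ μ) (hg₂ : Integrable g₂ μ)
    (hbound₁ : ∀ᵐ θ, θ ∈ U → ∀ᵐ x ∂μ, ‖deriv (F · x) θ‖ ≤ g₁ x)
    (hbound₂ : ∀ᵐ θ, θ ∈ U → ∀ᵐ x ∂μ, ‖deriv (deriv (F · x)) θ‖ ≤ g₂ x) :
    (∀ᶠ θ in 𝓝 θ₀, DifferentiableAt ℝ (fun θ => ∫ x, F θ x ∂μ) θ) ∧
      HasDerivAt (deriv fun θ => ∫ x, F θ x ∂μ) (∫ x, deriv (deriv (F · x)) θ₀ ∂μ) θ₀ := by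
  have hfirst : ∀ θ, U ∈ 𝓝 θ → Integrable (fun x => deriv (F · x) θ) μ ∧
      HasDerivAt (fun θ => ∫ x, F θ x ∂μ) (∫ x, deriv (F · x) θ ∂μ) θ := fun θ hθ =>
    hasDerivAt_integral_of_ae_norm_deriv_le hθ (fun t ht => (hF_int t ht).1)
      (hF_int θ (mem_of_mem_nhds hθ)) (hF_diff.mono fun x hx t ht => (hx t ht).1) hg₁ hbound₁
  have hsecond := hasDerivAt_integral_of_ae_norm_deriv_le (F := fun θ x => deriv (F · x) θ)
    (interior_mem_nhds.2 hU)
    (fun θ hθ => (hfirst θ (mem_interior_iff_mem_nhds.1 hθ)).1.1) (hfirst θ₀ hU).1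
    (hF_diff.mono fun x hx θ hθ => (hx θ (interior_subset hθ)).2) hg₂
    (hbound₂.mono fun θ hθ hmem => hθ (interior_subset hmem))
  have hnhds : ∀ᶠ θ in 𝓝 θ₀, U ∈ 𝓝 θ := eventually_mem_nhds_iff.2 hU
  exact ⟨hnhds.mono fun θ hθ => (hfirst θ hθ).2.differentiableAt,
    hsecond.2.congr_of_eventuallyEq (hnhds.mono fun θ hθ => (hfirst θ hθ).2.deriv)⟩

end ParametricDeriv

lemma hasDerivAt_deriv_log_comp {f : ℝ → ℝ} {t₀ : ℝ}
    (hf : ∀ᶠ t in 𝓝 t₀, DifferentiableAt ℝ f t)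
    (hf' : DifferentiableAt ℝ (deriv f) t₀) (h₀ : f t₀ ≠ 0) :
    HasDerivAt (deriv fun t => Real.log (f t))
      (deriv (deriv f) t₀ / f t₀ - deriv (fun t => Real.log (f t)) t₀ ^ 2) t₀ := by
  have hf₀ := hf.self_of_nhds
  have hlog : deriv (fun t => Real.log (f t)) =ᶠ[𝓝 t₀] fun t => deriv f t / f t := by
    filter_upwards [hf, hf₀.continuousAt.eventually_ne h₀] with t ht hne using deriv.log ht hne
  refine ((hf'.hasDerivAt.fun_div hf₀.hasDerivAt h₀).congr_of_eventuallyEq hlog).congr_deriv ?_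
  rw [hlog.self_of_nhds]
  field_simp

theorem louis_identity_general {α : Type*} [MeasurableSpace α] {μ : Measure α} [SFinite μ]
    {θ₀ : ℝ} {p : ℝ → α → ℝ} {Z : ℝ → ℝ} {π : ℝ → α → ℝ} {U : Set ℝ} {g₁ g₂ : α → ℝ}
    (hp_pos : ∀ᵐ x ∂μ, 0 < p θ₀ x) (hp_int : ∀ θ ∈ U, Integrable (p θ) μ)
    (hZ : ∀ θ, Z θ = ∫ x, p θ x ∂μ) (hZ_pos : 0 < Z θ₀) (hπ : ∀ θ x, π θ x = p θ x / Z θ)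
    (hU : U ∈ 𝓝 θ₀)
    (hdiff : ∀ᵐ x ∂μ, ∀ θ ∈ U,
      DifferentiableAt ℝ (p · x) θ ∧ DifferentiableAt ℝ (deriv (p · x)) θ)
    (hg₁ : Integrable g₁ μ) (hg₂ : Integrable g₂ μ)
    (hbound₁ : ∀ᵐ θ, θ ∈ U → ∀ᵐ x ∂μ, |deriv (p · x) θ| ≤ g₁ x)
    (hbound₂ : ∀ᵐ θ, θ ∈ U → ∀ᵐ x ∂μ, |deriv (deriv (p · x)) θ| ≤ g₂ x) :
    DifferentiableAt ℝ (fun θ => Real.log (Z θ)) θ₀ ∧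
    DifferentiableAt ℝ (deriv (fun θ => Real.log (Z θ))) θ₀ ∧
    deriv (deriv (fun θ => Real.log (Z θ))) θ₀ =
      -(deriv (fun θ => Real.log (Z θ)) θ₀) ^ 2 +
        ∫ x, (deriv (deriv (fun θ' => Real.log (p θ' x))) θ₀ +
            (deriv (fun θ' => Real.log (p θ' x)) θ₀) ^ 2) * π θ₀ x ∂μ := by
  obtain ⟨hZ_diff, hZ_deriv₂⟩ :=
    hasDerivAt_deriv_integral_of_ae_norm_deriv_le hU hp_int hdiff hg₁ hg₂ hbound₁ hbound₂
  rw [← funext hZ] at hZ_diff hZ_deriv₂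
  have hlogZ := hasDerivAt_deriv_log_comp hZ_diff hZ_deriv₂.differentiableAt hZ_pos.ne'
  have hintegrand : ∀ᵐ x ∂μ, (deriv (deriv fun θ => Real.log (p θ x)) θ₀ +
      deriv (fun θ => Real.log (p θ x)) θ₀ ^ 2) * π θ₀ x = deriv (deriv (p · x)) θ₀ / Z θ₀ := by
    filter_upwards [hp_pos, hdiff] with x hpos hx
    have hlogp := hasDerivAt_deriv_log_comp (eventually_of_mem hU fun θ hθ => (hx θ hθ).1)
      (hx θ₀ (mem_of_mem_nhds hU)).2 hpos.ne'
    rw [hlogp.deriv, sub_add_cancel, hπ, div_mul_div_cancel₀ hpos.ne']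
  refine ⟨hZ_diff.self_of_nhds.log hZ_pos.ne', hlogZ.differentiableAt, ?_⟩
  rw [hlogZ.deriv, hZ_deriv₂.deriv, integral_congr_ae hintegrand, integral_div]
  ring

/-- Louis' identity for a one-dimensional parameter: the second derivative of the
log-marginal likelihood `log Z(θ)`, with `Z θ = ∫ p θ x dx` and posterior
`π θ = p θ / Z θ`, equals
`−(∇θ log Z(θ₀))² + E_{π_{θ₀}}[∂²θ log p θ x + (∂θ log p θ x)²]`. -/
theorem louis_identity
    (θ₀ : ℝ) (d : ℕ)
    (p : ℝ → (Fin d → ℝ) → ℝ)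
    (hp_pos : ∀ θ x, 0 < p θ x) (hp_meas : ∀ θ, Measurable (p θ))
    (hp_int : ∀ θ, Integrable (p θ))
    (Z : ℝ → ℝ) (hZ : ∀ θ, Z θ = ∫ x, p θ x) (hZ_pos : ∀ θ, 0 < Z θ)
    (π : ℝ → (Fin d → ℝ) → ℝ) (hπ : ∀ θ x, π θ x = p θ x / Z θ)
    (U : Set ℝ) (hU : U ∈ 𝓝 θ₀)
    (hdiff : ∀ᵐ x : Fin d → ℝ, ∀ θ ∈ U,
      DifferentiableAt ℝ (fun θ' => p θ' x) θ ∧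
        DifferentiableAt ℝ (deriv (fun θ' => p θ' x)) θ)
    (g₁ g₂ : (Fin d → ℝ) → ℝ) (hg₁ : Integrable g₁) (hg₂ : Integrable g₂)
    (hbound₁ : ∀ θ ∈ U, ∀ᵐ x : Fin d → ℝ, |deriv (fun θ' => p θ' x) θ| ≤ g₁ x)
    (hbound₂ : ∀ θ ∈ U, ∀ᵐ x : Fin d → ℝ,
      |deriv (deriv (fun θ' => p θ' x)) θ| ≤ g₂ x) :
    DifferentiableAt ℝ (fun θ => Real.log (Z θ)) θ₀ ∧
    DifferentiableAt ℝ (deriv (fun θ => Real.log (Z θ))) θ₀ ∧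
    deriv (deriv (fun θ => Real.log (Z θ))) θ₀ =
      -(deriv (fun θ => Real.log (Z θ)) θ₀) ^ 2 +
        ∫ x, (deriv (deriv (fun θ' => Real.log (p θ' x))) θ₀ +
            (deriv (fun θ' => Real.log (p θ' x)) θ₀) ^ 2) * π θ₀ x :=
  louis_identity_general (.of_forall (hp_pos θ₀)) (fun θ _ => hp_int θ) hZ (hZ_pos θ₀) hπ hU
    hdiff hg₁ hg₂ (.of_forall hbound₁) (.of_forall hbound₂)
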